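/- Let n ≥ 3. If n ≡ 0 (mod 3), then the maximum of the permanent over Λ̂_n^3 equals 6^{n/3}. If n ≡ 1 (mod 3), then the maximum of the permanent over Λ̂_n^3 equals (3/2)·6^{(n−1)/3} = 9·6^{(n−4)/3}. If n ≡ 2 (mod 3) and n ≥ 8, then the maximum of the permanent over Λ̂_n^3 equals (9/4)·6^{(n−2)/3} = 81·6^{(n−8)/3}. -/

import Mathlib

open Matrix

/-- `Λ̂_n^3`: symmetric (0,1)-matrices with exactly three 1's in every row and
every column, and with 1's on the main diagonal. -/
def LambdaHat3 (n : ℕ) : Set (Matrix (Fin n) (Fin n) ℤ) :=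
  {A | (∀ i j, A i j = 0 ∨ A i j = 1) ∧ (∀ i, ∑ j, A i j = 3) ∧ (∀ j, ∑ i, A i j = 3) ∧
    A.IsSymm ∧ (∀ i, A i i = 1)}

/-!
A matrix in `Λ̂_n^3` is `1` plus the adjacency matrix of a 2-regular graph. Let `x₀, …, x₄` be a
path in this graph with `x₀` and `x₄` not adjacent. Replacing its three interior vertices by the
edge `x₀x₄` yields a matrix in `Λ̂_{n-3}^3`, and expanding both permanents in terms of the matrix
that remains after deleting the interior vertices shows that the permanent drops by a factor of at
most `6`. If a given vertex is not the middle of such a path, its component is a cycle of length 3,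
4 or 5; it splits off with a factor of `6`, `9` or `13`. By induction four times the permanent is at
most `c * 6 ^ ⌊n / 3⌋` with `c = 4, 6, 9` according to the residue of `n` modulo 3. Disjoint
triangles together with zero, one or two squares attain this bound.
-/

section Permanent

variable {m n R : Type*} [DecidableEq m] [Fintype m] [DecidableEq n] [Fintype n] [CommSemiring R]

theorem permanent_submatrix_equiv_self (e : n ≃ m) (A : Matrix m m R) :
    (A.submatrix e e).permanent = A.permanent := by
  refine Fintype.sum_equiv e.permCongr _ _ fun σ => Fintype.prod_equiv e _ _ fun i => ?_
  simp [Equiv.permCongr_apply]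

theorem permanent_fromBlocks_zero₂₁ (A : Matrix m m R) (B : Matrix m n R) (D : Matrix n n R) :
    (fromBlocks A B 0 D).permanent = A.permanent * D.permanent := by
  rw [permanent, permanent, permanent, Fintype.sum_mul_sum, ← Fintype.sum_prod_type']
  refine (Fintype.sum_of_injective (Equiv.Perm.sumCongrHom m n)
    Equiv.Perm.sumCongrHom_injective _ _ (fun σ hσ => ?_) fun σ => ?_).symm
  · contrapose! hσ with hprod
    refine Equiv.Perm.mem_sumCongrHom_range_of_perm_mapsTo_inl ?_
    rintro _ ⟨a, rfl⟩
    rcases hσa : σ (Sum.inl a) with b | b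
    · exact ⟨b, rfl⟩
    · exact absurd (Finset.prod_eq_zero (Finset.mem_univ (Sum.inl a)) (by simp [hσa])) hprod
  · simp [Fintype.prod_sum_type]

theorem permanent_eq_mul_of_toSquareBlockProp (A : Matrix n n R) (p : n → Prop) [DecidablePred p]
    (h : ∀ i, ¬p i → ∀ j, p j → A i j = 0) :
    A.permanent = (A.toSquareBlockProp p).permanent *
      (A.toSquareBlockProp fun i => ¬p i).permanent := by
  rw [← permanent_submatrix_equiv_self (Equiv.sumCompl p) A, ← permanent_fromBlocks_zero₂₁ _
    (A.submatrix (fun i : {i // p i} => (i : n)) fun j : {j // ¬p j} => (j : n))]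
  congr 1
  ext (i | i) (j | j)
  exacts [rfl, rfl, h i i.2 j j.2, rfl]

theorem permanent_eq_zero_of_row_eq_zero {A : Matrix n n R} {i : n} (h : A i = 0) :
    A.permanent = 0 :=
  Finset.sum_eq_zero fun σ _ => Finset.prod_eq_zero (Finset.mem_univ (σ.symm i)) (by simp [h])

theorem permanent_updateRow_add (A : Matrix n n R) (i : n) (u v : n → R) :
    (A.updateRow i (u + v)).permanent =
      (A.updateRow i u).permanent + (A.updateRow i v).permanent := by
  rw [permanent, permanent, permanent, ← Finset.sum_add_distrib]
  refine Finset.sum_congr rfl fun σ _ =>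
    (Finset.prod_add_prod_eq (Finset.mem_univ (σ.symm i)) ?_ ?_ ?_).symm
  · simp
  all_goals
    intro j _ hj
    have hσj : σ j ≠ i := fun h => hj (by simp [← h])
    simp [updateRow_ne hσj]

theorem permanent_updateRow_updateRow_comm {p q : n} (hpq : p ≠ q) (A : Matrix n n R)
    (u v : n → R) :
    ((A.updateRow p u).updateRow q v).permanent =
      ((A.updateRow p v).updateRow q u).permanent := by
  rw [← permanent_permute_cols (Equiv.swap p q)]
  congr 1
  ext i j
  by_cases hp : i = p
  · simp [hp, updateRow_apply, hpq]
  by_cases hq : i = q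
  · simp [hq, updateRow_apply, hpq]
  simp [updateRow_apply, hp, hq, Equiv.swap_apply_of_ne_of_ne hp hq]

/-- The square matrix `A` bordered by a first row `(α, u)` and a first column `(α, c)`; the new
index is `none`. -/
def bordered (α : R) (u c : n → R) (A : Matrix n n R) : Matrix (Option n) (Option n) R
  | none, none => α
  | none, some j => u j
  | some i, none => c i
  | some i, some j => A i j

theorem permanent_bordered (α : R) (u c : n → R) (A : Matrix n n R) :
    (bordered α u c A).permanent =
      α * A.permanent + ∑ i, c i * (A.updateRow i u).permanent := by
  rw [permanent, ← Equiv.sum_comp Equiv.Perm.decomposeOption.symm, Fintype.sum_prod_type,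
    Fintype.sum_option]
  simp only [permanent, Finset.mul_sum]
  congr 1
  · refine Finset.sum_congr rfl fun σ _ => ?_
    simp [Fintype.prod_option, bordered]
  · refine Finset.sum_congr rfl fun a _ => Finset.sum_congr rfl fun σ _ => ?_
    simp only [Fintype.prod_option, Equiv.Perm.decomposeOption_symm_apply, Equiv.Perm.mul_apply,
      Equiv.optionCongr_apply, Option.map_none, Option.map_some, Equiv.swap_apply_left]
    congr 1
    refine Finset.prod_congr rfl fun b _ => ?_
    by_cases h : σ b = a
    · simp [h, bordered]
    · rw [Equiv.swap_apply_of_ne_of_ne (by simp) (by simpa using h), updateRow_ne h]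
      rfl

theorem permanent_bordered_single (α : R) (u : n → R) (p : n) (A : Matrix n n R) :
    (bordered α u (Pi.single p 1) A).permanent =
      α * A.permanent + (A.updateRow p u).permanent := by
  simp [permanent_bordered, Pi.single_apply]

end Permanent

section BorderedRows

variable {n R : Type*} [DecidableEq n]

theorem updateRow_bordered_none (α : R) (u c : n → R) (A : Matrix n n R) (w : Option n → R) :
    (bordered α u c A).updateRow none w = bordered (w none) (w ∘ some) c A := by
  ext (_ | i) (_ | j) <;> simp [bordered, updateRow_apply]

theorem updateRow_bordered_some (α : R) (u c : n → R) (A : Matrix n n R) (p : n)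
    (w : Option n → R) :
    (bordered α u c A).updateRow (some p) w =
      bordered α u (Function.update c p (w none)) (A.updateRow p (w ∘ some)) := by
  ext (_ | i) (_ | j) <;> simp [bordered, updateRow_apply, Function.update_apply]

end BorderedRows

section TwoTerminal

variable {n R : Type*} [DecidableEq n] [CommSemiring R]

/-- The matrix obtained from `A`, viewed as the matrix of a graph with a loop at every vertex, by
joining a new vertex `none` (with a loop) to the vertex `p`. -/
def pendant (p : n) (A : Matrix n n R) : Matrix (Option n) (Option n) R :=
  bordered 1 (Pi.single p 1) (Pi.single p 1) A

/-- The matrix obtained from the matrix `A` of a graph by adding the edge `pq`. -/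
def addEdge (p q : n) (A : Matrix n n R) : Matrix n n R :=
  A + Matrix.single p q 1 + Matrix.single q p 1

theorem single_none_comp_some : (Pi.single none 1 : Option n → R) ∘ some = 0 := by
  ext; simp

theorem single_some_comp_some (q : n) :
    (Pi.single (some q) 1 : Option n → R) ∘ some = Pi.single q 1 := by
  ext; simp [Pi.single_apply]

theorem updateRow_pendant_some_some {p q : n} (hpq : p ≠ q) (A : Matrix n n R) :
    (pendant p A).updateRow (some q) (Pi.single (some q) 1) =
      pendant p (A.updateRow q (Pi.single q 1)) := by
  have hcol : Function.update (Pi.single p 1 : n → R) q 0 = Pi.single p 1 := by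
    simp [Function.update_eq_self_iff, hpq.symm]
  rw [pendant, updateRow_bordered_some, single_some_comp_some,
    Pi.single_eq_of_ne (by simp), hcol, pendant]

theorem addEdge_eq_updateRow_updateRow {p q : n} (hpq : p ≠ q) (A : Matrix n n R) :
    addEdge p q A =
      (A.updateRow p (A p + Pi.single q 1)).updateRow q (A q + Pi.single p 1) := by
  ext i j
  by_cases hp : i = p <;> by_cases hq : i = q <;>
    simp_all [addEdge, updateRow_apply, Matrix.single_apply, Pi.single_apply, eq_comm]

variable [Fintype n]

theorem sum_addEdge_apply (p q : n) (A : Matrix n n R) (i : n) :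
    ∑ j, addEdge p q A i j =
      ∑ j, A i j + (Pi.single p 1 : n → R) i + (Pi.single q 1 : n → R) i := by
  by_cases hp : p = i <;> by_cases hq : q = i <;>
    simp [addEdge, Finset.sum_add_distrib, Matrix.single_apply, hp, hq, Ne.symm]

theorem permanent_pendant (p : n) (A : Matrix n n R) :
    (pendant p A).permanent = A.permanent + (A.updateRow p (Pi.single p 1)).permanent := by
  rw [pendant, permanent_bordered_single, one_mul]

theorem permanent_updateRow_pendant_none_none (p : n) (A : Matrix n n R) :
    ((pendant p A).updateRow none (Pi.single none 1)).permanent = A.permanent := by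
  rw [pendant, updateRow_bordered_none, single_none_comp_some, permanent_bordered_single,
    permanent_eq_zero_of_row_eq_zero (updateRow_self (M := A) (i := p) (b := 0))]
  simp

theorem permanent_updateRow_pendant_none_some (p q : n) (A : Matrix n n R) :
    ((pendant p A).updateRow none (Pi.single (some q) 1)).permanent =
      (A.updateRow p (Pi.single q 1)).permanent := by
  rw [pendant, updateRow_bordered_none, single_some_comp_some, permanent_bordered_single]
  simp

theorem permanent_updateRow_pendant_some_none (p q : n) (A : Matrix n n R) :
    ((pendant p A).updateRow (some q) (Pi.single none 1)).permanent =
      (A.updateRow q (Pi.single p 1)).permanent := by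
  have hzero : (A.updateRow q 0).permanent = 0 :=
    permanent_eq_zero_of_row_eq_zero updateRow_self
  have hzero' (i : n) (hi : i ≠ q) :
      ((A.updateRow q 0).updateRow i (Pi.single p 1)).permanent = 0 :=
    permanent_eq_zero_of_row_eq_zero ((updateRow_ne hi.symm).trans updateRow_self)
  rw [pendant, updateRow_bordered_some, single_none_comp_some, permanent_bordered, hzero,
    Finset.sum_eq_single q (fun i _ hi => by rw [hzero' i hi, mul_zero]) (by simp)]
  simp

theorem permanent_addEdge {p q : n} (hpq : p ≠ q) (A : Matrix n n R) :
    (addEdge p q A).permanent =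
      A.permanent + ((A.updateRow p (Pi.single p 1)).updateRow q (Pi.single q 1)).permanent +
        (A.updateRow p (Pi.single q 1)).permanent + (A.updateRow q (Pi.single p 1)).permanent := by
  have hself {i j : n} (hij : i ≠ j) (w : n → R) :
      (A.updateRow i w).updateRow j (A j) = A.updateRow i w := by
    rw [updateRow_comm _ hij, updateRow_eq_self]
  rw [addEdge_eq_updateRow_updateRow hpq, permanent_updateRow_add, hself hpq,
    permanent_updateRow_add, updateRow_eq_self, updateRow_comm _ hpq, permanent_updateRow_add,
    hself hpq.symm, updateRow_comm _ hpq.symm, permanent_updateRow_updateRow_comm hpq]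
  ring

/-- The matrix obtained from `A` by joining the vertices `p` and `q` through a path with three new
interior vertices. -/
def addPath (p q : n) (A : Matrix n n R) :
    Matrix (Option (Option (Option n))) (Option (Option (Option n))) R :=
  addEdge none (some (some (some q))) (pendant none (pendant none (pendant p A)))

theorem permanent_addPath {p q : n} (hpq : p ≠ q) (A : Matrix n n R) :
    (addPath p q A).permanent =
      3 * A.permanent + 2 * (A.updateRow p (Pi.single p 1)).permanent +
        2 * (A.updateRow q (Pi.single q 1)).permanent +
        ((A.updateRow p (Pi.single p 1)).updateRow q (Pi.single q 1)).permanent +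
        (A.updateRow p (Pi.single q 1)).permanent + (A.updateRow q (Pi.single p 1)).permanent := by
  rw [addPath, permanent_addEdge (by simp), updateRow_comm _ (by simp),
    updateRow_pendant_some_some (by simp)]
  simp only [updateRow_pendant_some_some, permanent_pendant, permanent_updateRow_pendant_none_none,
    permanent_updateRow_pendant_none_some, permanent_updateRow_pendant_some_none, ne_eq, hpq,
    reduceCtorEq, not_false_eq_true, updateRow_comm A hpq]
  ring

end TwoTerminal

section Order

variable {n R : Type*} [DecidableEq n] [CommSemiring R] [PartialOrder R] [IsOrderedRing R]
  {A B : Matrix n n R}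

theorem updateRow_single_nonneg (hA : ∀ i j, 0 ≤ A i j) (p q i j : n) :
    0 ≤ A.updateRow p (Pi.single q 1) i j := by
  rw [updateRow_apply]
  split_ifs
  exacts [Pi.single_nonneg (α := fun _ => R).2 zero_le_one j, hA i j]

variable [Fintype n]

theorem permanent_nonneg (hA : ∀ i j, 0 ≤ A i j) : 0 ≤ A.permanent :=
  Finset.sum_nonneg fun _ _ => Finset.prod_nonneg fun _ _ => hA _ _

theorem permanent_mono (hA : ∀ i j, 0 ≤ A i j) (hAB : ∀ i j, A i j ≤ B i j) :
    A.permanent ≤ B.permanent :=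
  Finset.sum_le_sum fun _ _ => Finset.prod_le_prod (fun _ _ => hA _ _) fun _ _ => hAB _ _

theorem permanent_updateRow_single_le (hA : ∀ i j, 0 ≤ A i j) {p : n} (hp : 1 ≤ A p p) :
    (A.updateRow p (Pi.single p 1)).permanent ≤ A.permanent := by
  refine permanent_mono (updateRow_single_nonneg hA p p) fun i j => ?_
  by_cases hi : i = p
  · subst hi
    by_cases hj : j = i
    · subst hj; simpa using hp
    · simpa [hj] using hA i j
  · rw [updateRow_ne hi]

/-- Every permutation contributing to the permanent maps `p` to `y`. -/
theorem permanent_le_permanent_updateRow_single (hA : ∀ i j, 0 ≤ A i j) {p y : n}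
    (hy : A y p ≤ 1) (hcol : ∀ i, i ≠ y → A i p = 0) :
    A.permanent ≤ (A.updateRow y (Pi.single p 1)).permanent := by
  refine Finset.sum_le_sum fun σ _ => ?_
  by_cases hσ : σ p = y
  · refine Finset.prod_le_prod (fun _ _ => hA _ _) fun i _ => ?_
    by_cases hi : i = p
    · subst hi; simpa [hσ] using hy
    · have hσi : σ i ≠ y := fun h => hi (σ.injective (h.trans hσ.symm))
      rw [updateRow_ne hσi]
  · rw [Finset.prod_eq_zero (f := fun i => A (σ i) i) (Finset.mem_univ p) (hcol _ hσ)]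
    exact Finset.prod_nonneg fun _ _ => updateRow_single_nonneg hA _ _ _ _

/-- Swapping the rows `p` and `y` turns the off-diagonal entries `(p, y)`, `(y, p)` into the
diagonal ones, which are at least as large. -/
theorem permanent_updateRow_single_le_of_col (hA : ∀ i j, 0 ≤ A i j) {p y : n} (hpy : p ≠ y)
    (hyy : 1 ≤ A y y) (hyp : A y p ≤ 1) (hcol : ∀ i, i ≠ p → i ≠ y → A i p = 0) :
    (A.updateRow p (Pi.single y 1)).permanent ≤ (A.updateRow p (Pi.single p 1)).permanent :=
  calc (A.updateRow p (Pi.single y 1)).permanent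
      ≤ ((A.updateRow p (Pi.single y 1)).updateRow y (Pi.single p 1)).permanent := by
        refine permanent_le_permanent_updateRow_single (updateRow_single_nonneg hA p y) ?_ ?_
        · rwa [updateRow_ne hpy.symm]
        · intro i hiy
          by_cases hip : i = p
          · simp [hip, hpy]
          · rw [updateRow_ne hip, hcol i hip hiy]
    _ = ((A.updateRow p (Pi.single p 1)).updateRow y (Pi.single y 1)).permanent :=
        permanent_updateRow_updateRow_comm hpy _ _ _
    _ ≤ (A.updateRow p (Pi.single p 1)).permanent :=
        permanent_updateRow_single_le (updateRow_single_nonneg hA p p)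
          (by rwa [updateRow_ne hpy.symm])

theorem permanent_le_two_mul_permanent_updateRow (hA : ∀ i j, 0 ≤ A i j) {p y : n} (hpy : p ≠ y)
    (hrow : A p = Pi.single p 1 + Pi.single y 1) (hyy : 1 ≤ A y y) (hyp : A y p ≤ 1)
    (hcol : ∀ i, i ≠ p → i ≠ y → A i p = 0) :
    A.permanent ≤ 2 * (A.updateRow p (Pi.single p 1)).permanent := by
  rw [← updateRow_eq_self A p, hrow, permanent_updateRow_add, updateRow_idem, two_mul]
  gcongr
  exact permanent_updateRow_single_le_of_col hA hpy hyy hyp hcol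

end Order

section Contraction

variable {n R : Type*} [DecidableEq n] [Fintype n] [CommRing R] [LinearOrder R]
  [IsStrictOrderedRing R] {A : Matrix n n R}

theorem permanent_addPath_le (hA : ∀ i j, 0 ≤ A i j) (hsymm : A.IsSymm) {p q y : n}
    (hpq : p ≠ q) (hpy : p ≠ y) (hqy : q ≠ y) (hrow : A p = Pi.single p 1 + Pi.single y 1)
    (hyy : 1 ≤ A y y) : (addPath p q A).permanent ≤ 6 * (addEdge p q A).permanent := by
  set N := A.updateRow q (Pi.single q 1) with hN
  have hN0 : ∀ i j, 0 ≤ N i j := updateRow_single_nonneg hA q q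
  have hcol (i : n) : A i p = (Pi.single p 1 + Pi.single y 1 : n → R) i := by
    rw [hsymm.apply, hrow]
  have hp : (A.updateRow p (Pi.single p 1)).permanent ≤ A.permanent :=
    permanent_updateRow_single_le hA (by simp [hrow, hpy])
  have hq : N.permanent ≤ 2 * (N.updateRow p (Pi.single p 1)).permanent := by
    refine permanent_le_two_mul_permanent_updateRow hN0 hpy ?_ ?_ ?_ fun i hip hiy => ?_
    · rw [hN, updateRow_ne hpq, hrow]
    · rwa [hN, updateRow_ne hqy.symm]
    · simp [hN, updateRow_ne hqy.symm, hcol, hpy.symm]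
    · by_cases hiq : i = q
      · simp [hN, hiq, hpq]
      · simp [hN, updateRow_ne hiq, hcol, hip, hiy]
  rw [hN, updateRow_comm _ hpq.symm] at hq
  -- With `a, …, f` the six permanents, `b ≤ a` and `c ≤ 2 d` give
  -- `3 a + 2 b + 2 c + d + e + f ≤ 6 (a + d + e + f)`.
  rw [permanent_addPath hpq, permanent_addEdge hpq]
  have ha := permanent_nonneg hA
  have hd := permanent_nonneg (updateRow_single_nonneg (updateRow_single_nonneg hA p p) q q)
  have he := permanent_nonneg (updateRow_single_nonneg hA p q)
  have hf := permanent_nonneg (updateRow_single_nonneg hA q p)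
  linarith

end Contraction

theorem exists_option_equiv {V : Type*} [DecidableEq V] {x y z : V} (hxy : x ≠ y) (hxz : x ≠ z)
    (hyz : y ≠ z) : ∃ e : Option (Option (Option {v // v ∉ ({x, y, z} : Finset V)})) ≃ V,
      e none = x ∧ e (some none) = y ∧ e (some (some none)) = z ∧
        ∀ v, e (some (some (some v))) = v := by
  let f : Option (Option (Option {v // v ∉ ({x, y, z} : Finset V)})) → V
    | none => x
    | some none => y
    | some (some none) => z
    | some (some (some v)) => v
  refine ⟨Equiv.ofBijective f ⟨?_, fun v => ?_⟩, rfl, rfl, rfl, fun _ => rfl⟩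
  · rintro (_ | _ | _ | v) (_ | _ | _ | w) hvw <;> grind
  · by_cases hv : v ∈ ({x, y, z} : Finset V)
    · simp only [Finset.mem_insert, Finset.mem_singleton] at hv
      rcases hv with rfl | rfl | rfl
      exacts [⟨none, rfl⟩, ⟨some none, rfl⟩, ⟨some (some none), rfl⟩]
    · exact ⟨some (some (some ⟨v, hv⟩)), rfl⟩

/-- The condition defining `LambdaHat3`, over an arbitrary finite index type. Such a matrix is
`1` plus the adjacency matrix of a 2-regular simple graph. -/
structure IsLambdaHat3 {V : Type*} [Fintype V] (A : Matrix V V ℤ) : Prop where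
  zero_or_one : ∀ i j, A i j = 0 ∨ A i j = 1
  row_sum : ∀ i, ∑ j, A i j = 3
  isSymm : A.IsSymm
  diag : ∀ i, A i i = 1

theorem mem_lambdaHat3_iff {n : ℕ} {A : Matrix (Fin n) (Fin n) ℤ} :
    A ∈ LambdaHat3 n ↔ IsLambdaHat3 A := by
  refine ⟨fun ⟨h01, hrow, _, hsymm, hdiag⟩ => ⟨h01, hrow, hsymm, hdiag⟩, fun h => ?_⟩
  refine ⟨h.zero_or_one, h.row_sum, fun j => ?_, h.isSymm, h.diag⟩
  simpa only [h.isSymm.apply] using h.row_sum j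

namespace IsLambdaHat3

variable {V W : Type*} [Fintype V] [Fintype W] {A : Matrix V V ℤ}

theorem nonneg (hA : IsLambdaHat3 A) (i j : V) : 0 ≤ A i j := by
  rcases hA.zero_or_one i j with h | h <;> simp [h]

theorem apply_eq_one_comm (hA : IsLambdaHat3 A) {i j : V} : A i j = 1 ↔ A j i = 1 := by
  rw [hA.isSymm.apply]

theorem submatrix_equiv (hA : IsLambdaHat3 A) (e : W ≃ V) : IsLambdaHat3 (A.submatrix e e) where
  zero_or_one _ _ := hA.zero_or_one _ _
  row_sum i := (Equiv.sum_comp e fun j => A (e i) j).trans (hA.row_sum _)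
  isSymm := hA.isSymm.submatrix e
  diag _ := hA.diag _

theorem exists_mem_lambdaHat3 [DecidableEq V] (hA : IsLambdaHat3 A) :
    ∃ B ∈ LambdaHat3 (Fintype.card V), B.permanent = A.permanent :=
  ⟨_, mem_lambdaHat3_iff.2 (hA.submatrix_equiv (Fintype.equivFin V).symm),
    permanent_submatrix_equiv_self _ _⟩

theorem fromBlocks {B : Matrix W W ℤ} (hA : IsLambdaHat3 A) (hB : IsLambdaHat3 B) :
    IsLambdaHat3 (fromBlocks A 0 0 B) where
  zero_or_one := by rintro (_ | _) (_ | _) <;> simp [hA.zero_or_one, hB.zero_or_one]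
  row_sum := by rintro (_ | _) <;> simp [hA.row_sum, hB.row_sum]
  isSymm := hA.isSymm.fromBlocks (transpose_zero ..) hB.isSymm
  diag := by rintro (_ | _) <;> simp [hA.diag, hB.diag]

theorem toSquareBlockProp (hA : IsLambdaHat3 A) (p : V → Prop) [DecidablePred p]
    (h : ∀ i, p i → ∀ j, ¬p j → A i j = 0) : IsLambdaHat3 (A.toSquareBlockProp p) where
  zero_or_one _ _ := hA.zero_or_one _ _
  row_sum i := by
    rw [← hA.row_sum i, ← Fintype.sum_subtype_add_sum_subtype p,
      Fintype.sum_eq_zero (fun j : {j // ¬p j} => A i j) fun j => h i i.2 j j.2, add_zero]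
    rfl
  isSymm := hA.isSymm.submatrix _
  diag _ := hA.diag _

theorem exists_neighbor (hA : IsLambdaHat3 A) (x : V) : ∃ u, u ≠ x ∧ A x u = 1 := by
  by_contra! h
  have hsum := hA.row_sum x
  rw [Fintype.sum_eq_single x fun j hj => (hA.zero_or_one x j).resolve_right (h j hj),
    hA.diag] at hsum
  norm_num at hsum

theorem exists_other_neighbor (hA : IsLambdaHat3 A) {x u : V} (hux : u ≠ x) :
    ∃ w, w ≠ x ∧ w ≠ u ∧ A x w = 1 := by
  by_contra! h
  have hsum := hA.row_sum x
  rw [Fintype.sum_eq_add x u hux.symm fun j hj =>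
    (hA.zero_or_one x j).resolve_right (h j hj.1 hj.2), hA.diag] at hsum
  rcases hA.zero_or_one x u with hu | hu <;> rw [hu] at hsum <;> norm_num at hsum

theorem row_eq [DecidableEq V] (hA : IsLambdaHat3 A) {x u w : V} (hux : u ≠ x) (hwx : w ≠ x)
    (huw : u ≠ w) (hu : A x u = 1) (hw : A x w = 1) :
    A x = Pi.single x 1 + Pi.single u 1 + Pi.single w 1 := by
  have hle (j : V) : (Pi.single x 1 + Pi.single u 1 + Pi.single w 1 : V → ℤ) j ≤ A x j := by
    by_cases hx : j = x
    · simp [hx, hux.symm, hwx.symm, hA.diag]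
    by_cases hju : j = u
    · simp [hju, hux, huw, hu]
    by_cases hjw : j = w
    · simp [hjw, hwx, huw.symm, hw]
    simpa [hx, hju, hjw] using hA.nonneg x j
  have hsum : ∑ j, (Pi.single x 1 + Pi.single u 1 + Pi.single w 1 : V → ℤ) j = ∑ j, A x j := by
    simp [hA.row_sum, Finset.sum_add_distrib]
  ext j
  exact ((Finset.sum_eq_sum_iff_of_le fun j _ => hle j).1 hsum j (Finset.mem_univ j)).symm

end IsLambdaHat3

section Cycle

/-- The matrix `1` plus the adjacency matrix of the cycle of length `k + 3`. -/
def cycleMatrix (k : ℕ) : Matrix (Fin (k + 3)) (Fin (k + 3)) ℤ :=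
  of fun i => Pi.single i 1 + Pi.single (i + 1) 1 + Pi.single (i - 1) 1

theorem fin_add_one_ne_sub_one {k : ℕ} (i : Fin (k + 3)) : i + 1 ≠ i - 1 := by
  rw [sub_eq_add_neg, Ne, add_right_inj, eq_neg_iff_add_eq_zero]
  simp [Fin.ext_iff, Fin.val_add, Nat.mod_eq_of_lt (show 2 < k + 3 by lia)]

theorem isLambdaHat3_cycleMatrix (k : ℕ) : IsLambdaHat3 (cycleMatrix k) := by
  refine ⟨fun i j => ?_, fun i => ?_, ?_, fun i => ?_⟩
  · by_cases hi : j = i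
    · subst hi
      simp [cycleMatrix, eq_sub_iff_add_eq]
    · by_cases hj : j = i + 1
      · subst hj
        simp [cycleMatrix, fin_add_one_ne_sub_one]
      · simp [cycleMatrix, Pi.single_apply, hi, hj, em']
  · simp [cycleMatrix, Finset.sum_add_distrib]
  · ext i j
    simp only [cycleMatrix, transpose_apply, of_apply, Pi.add_apply, Pi.single_apply,
      eq_sub_iff_add_eq, eq_comm]
    ring
  · simp [cycleMatrix, eq_sub_iff_add_eq]

theorem permanent_cycleMatrix_zero : (cycleMatrix 0).permanent = 6 := by
  decide +kernel

theorem permanent_cycleMatrix_one : (cycleMatrix 1).permanent = 9 := by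
  decide +kernel

theorem permanent_cycleMatrix_two : (cycleMatrix 2).permanent = 13 := by
  decide +kernel

end Cycle

namespace IsLambdaHat3

variable {V W : Type*} [Fintype V] [Fintype W] {A : Matrix V V ℤ}

theorem apply_eq_zero_of_notMem_range (hA : IsLambdaHat3 A) {f : W → V}
    (hf : Function.Injective f) (hT : IsLambdaHat3 (A.submatrix f f)) (i : W) {v : V}
    (hv : v ∉ Set.range f) : A (f i) v = 0 := by
  classical
  have hsum : ∑ j ∈ Finset.univ.image f, A (f i) j = ∑ j, A (f i) j := by
    rw [Finset.sum_image hf.injOn, hA.row_sum]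
    exact hT.row_sum i
  rw [← Finset.sum_add_sum_compl (Finset.univ.image f), left_eq_add,
    Finset.sum_eq_zero_iff_of_nonneg fun j _ => hA.nonneg _ j] at hsum
  exact hsum v (by simpa using hv)

theorem exists_permanent_eq_mul [DecidableEq V] [DecidableEq W] (hA : IsLambdaHat3 A) {f : W → V}
    (hf : Function.Injective f) (hT : IsLambdaHat3 (A.submatrix f f)) :
    ∃ m, m + Fintype.card W = Fintype.card V ∧ ∃ B ∈ LambdaHat3 m,
      A.permanent = (A.submatrix f f).permanent * B.permanent := by
  have hzero (i : V) (hi : i ∈ Set.range f) (j : V) (hj : j ∉ Set.range f) : A i j = 0 := by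
    obtain ⟨i, rfl⟩ := hi
    exact hA.apply_eq_zero_of_notMem_range hf hT i hj
  have hzero' (i : V) (hi : i ∉ Set.range f) (j : V) (hj : j ∈ Set.range f) : A i j = 0 := by
    rw [← hA.isSymm.apply, hzero j hj i hi]
  obtain ⟨B, hB, hBA⟩ := (hA.toSquareBlockProp (· ∉ Set.range f) fun i hi j hj =>
    hzero' i hi j (not_not.1 hj)).exists_mem_lambdaHat3
  have hblock : (A.submatrix f f).permanent = (A.toSquareBlockProp (· ∈ Set.range f)).permanent :=
    permanent_submatrix_equiv_self (Equiv.ofInjective f hf)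
      (A.toSquareBlockProp (· ∈ Set.range f))
  refine ⟨_, ?_, B, hB, ?_⟩
  · rw [Fintype.card_subtype_compl, Set.card_range_of_injective hf]
    exact Nat.sub_add_cancel (Fintype.card_le_of_injective f hf)
  · rw [permanent_eq_mul_of_toSquareBlockProp A (· ∈ Set.range f) hzero', hBA, hblock]
    congr!

theorem submatrix_eq_cycleMatrix (hA : IsLambdaHat3 A) {k : ℕ} {f : Fin (k + 3) → V}
    (hf : Function.Injective f) (hadj : ∀ i, A (f i) (f (i + 1)) = 1) :
    A.submatrix f f = cycleMatrix k := by
  classical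
  ext i j
  have hpred : A (f i) (f (i - 1)) = 1 := by
    simpa [hA.apply_eq_one_comm] using hadj (i - 1)
  rw [submatrix_apply, hA.row_eq (hf.ne (by simp)) (hf.ne (by simp))
    (hf.ne (fin_add_one_ne_sub_one i)) (hadj i) hpred]
  simp [cycleMatrix, Pi.single_apply, hf.eq_iff]

theorem exists_permanent_eq_cycleMatrix_mul [DecidableEq V] (hA : IsLambdaHat3 A) {k : ℕ}
    {f : Fin (k + 3) → V} (hf : Function.Injective f) (hadj : ∀ i, A (f i) (f (i + 1)) = 1) :
    ∃ m, m + (k + 3) = Fintype.card V ∧ ∃ B ∈ LambdaHat3 m,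
      A.permanent = (cycleMatrix k).permanent * B.permanent := by
  have hcycle := hA.submatrix_eq_cycleMatrix hf hadj
  simpa only [hcycle, Fintype.card_fin] using
    hA.exists_permanent_eq_mul hf (hcycle ▸ isLambdaHat3_cycleMatrix k)

theorem addEdge_of_pendant [DecidableEq V] {p q : V} (hpq : p ≠ q)
    (hA : IsLambdaHat3 (addEdge none (some q) (pendant p A))) (hApq : A p q = 0) :
    IsLambdaHat3 (addEdge p q A) := by
  have hsymm : A.IsSymm := by
    ext i j
    simpa [addEdge, pendant, bordered] using hA.isSymm.apply (some i) (some j)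
  have hdiag (i : V) : A i i = 1 := by
    simpa [addEdge, pendant, bordered] using hA.diag (some i)
  have hrow (i : V) : ∑ j, A i j + (Pi.single p 1 : V → ℤ) i + (Pi.single q 1 : V → ℤ) i = 3 := by
    simpa [addEdge, pendant, bordered, Matrix.single_apply, Fintype.sum_option, eq_comm,
      Pi.single_apply, add_comm, add_left_comm] using hA.row_sum (some i)
  refine ⟨fun i j => ?_, fun i => ?_, ?_, fun i => ?_⟩
  · have hAqp : A q p = 0 := by rw [hsymm.apply, hApq]
    have hpq' : q ≠ p := hpq.symm
    by_cases hij : p = i ∧ q = j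
    · obtain ⟨rfl, rfl⟩ := hij
      simp [addEdge, hApq, hpq, hpq']
    by_cases hji : q = i ∧ p = j
    · obtain ⟨rfl, rfl⟩ := hji
      simp [addEdge, hAqp, hpq, hpq']
    · simpa [addEdge, pendant, bordered, Matrix.single_apply, hij, hji] using
        hA.zero_or_one (some i) (some j)
  · rw [sum_addEdge_apply, hrow]
  · rw [IsSymm, addEdge, transpose_add, transpose_add, hsymm, transpose_single, transpose_single,
      add_right_comm]
  · have hne : ¬(p = i ∧ q = i) := fun h => hpq (h.1.trans h.2.symm)
    simp [addEdge, hdiag, hne, mt And.symm hne]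

theorem addEdge_of_addPath [DecidableEq V] {p q : V} (hpq : p ≠ q)
    (hA : IsLambdaHat3 (addPath p q A)) (hApq : A p q = 0) : IsLambdaHat3 (addEdge p q A) := by
  have hA₂ := addEdge_of_pendant (by simp) hA (by simp [pendant, bordered])
  have hA₁ := addEdge_of_pendant (by simp) hA₂ (by simp [pendant, bordered, hpq])
  exact addEdge_of_pendant hpq hA₁ hApq

theorem eq_addPath [DecidableEq V] {M : Matrix (Option (Option (Option V))) _ ℤ}
    (hM : IsLambdaHat3 M) {p q : V} (h₁ : M none (some none) = 1)
    (h₂ : M (some none) (some (some none)) = 1)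
    (hp : M (some (some none)) (some (some (some p))) = 1)
    (hq : M none (some (some (some q))) = 1) :
    M = addPath p q (M.submatrix (some ∘ some ∘ some) (some ∘ some ∘ some)) := by
  have hrow₀ := hM.row_eq (by simp) (by simp) (by simp) h₁ hq
  have hrow₁ := hM.row_eq (by simp) (by simp) (by simp) (hM.apply_eq_one_comm.1 h₁) h₂
  have hrow₂ := hM.row_eq (by simp) (by simp) (by simp) (hM.apply_eq_one_comm.1 h₂) hp
  have hcol₀ i : M i none = _ := (hM.isSymm.apply none i).trans (congrFun hrow₀ i)
  have hcol₁ i : M i (some none) = _ := (hM.isSymm.apply _ i).trans (congrFun hrow₁ i)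
  have hcol₂ i : M i (some (some none)) = _ := (hM.isSymm.apply _ i).trans (congrFun hrow₂ i)
  ext (_ | _ | _ | i) (_ | _ | _ | j) <;>
    simp [addPath, addEdge, pendant, bordered, hrow₀, hrow₁, hrow₂, hcol₀, hcol₁, hcol₂,
      Matrix.single_apply, Pi.single_apply, eq_comm]

theorem exists_permanent_le_of_option [DecidableEq V]
    {M : Matrix (Option (Option (Option V))) _ ℤ} (hM : IsLambdaHat3 M) {p q : V} (hpq : p ≠ q)
    (h₁ : M none (some none) = 1) (h₂ : M (some none) (some (some none)) = 1)
    (hp : M (some (some none)) (some (some (some p))) = 1)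
    (hq : M none (some (some (some q))) = 1)
    (hMpq : M (some (some (some p))) (some (some (some q))) = 0) :
    ∃ B ∈ LambdaHat3 (Fintype.card V), M.permanent ≤ 6 * B.permanent := by
  set A := M.submatrix (some ∘ some ∘ some) (some ∘ some ∘ some)
  have hMA : M = addPath p q A := hM.eq_addPath h₁ h₂ hp hq
  obtain ⟨B, hB, hBA⟩ := (addEdge_of_addPath hpq (hMA ▸ hM) hMpq).exists_mem_lambdaHat3
  refine ⟨B, hB, ?_⟩
  have hp' := hM.apply_eq_one_comm.1 hp
  obtain ⟨z, hzp, hz, hpz⟩ := hM.exists_other_neighbor (x := some (some (some p)))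
    (u := some (some none)) (by simp)
  have hrow := hM.row_eq (by simp) hzp hz.symm hp' hpz
  obtain ⟨y, rfl⟩ : ∃ y, z = some (some (some y)) := by
    rw [hMA] at hpz
    rcases z with _ | _ | _ | y
    · simp [addPath, addEdge, pendant, bordered, hpq.symm] at hpz
    · simp [addPath, addEdge, pendant, bordered] at hpz
    · exact absurd rfl hz
    · exact ⟨y, rfl⟩
  have hqy : q ≠ y := by rintro rfl; simp [hMpq] at hpz
  rw [hBA, hMA]
  refine permanent_addPath_le (fun _ _ => hM.nonneg _ _) (hM.isSymm.submatrix _) hpq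
    (by simpa [eq_comm] using hzp) hqy ?_ (hM.diag _).ge
  ext j
  simp [hrow, Pi.single_apply]

theorem exists_permanent_le_of_path [DecidableEq V] (hA : IsLambdaHat3 A) {x : Fin 5 → V}
    (hx : Function.Injective x) (hadj : ∀ i : Fin 4, A (x i.castSucc) (x i.succ) = 1)
    (hx₀₄ : A (x 0) (x 4) = 0) :
    ∃ m, m + 3 = Fintype.card V ∧ ∃ B ∈ LambdaHat3 m, A.permanent ≤ 6 * B.permanent := by
  obtain ⟨e, he₁, he₂, he₃, he⟩ := exists_option_equiv (x := x 1) (y := x 2) (z := x 3)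
    (hx.ne (by simp)) (hx.ne (by simp)) (hx.ne (by simp))
  have hmem (i : Fin 5) (h₁ : i ≠ 1) (h₂ : i ≠ 2) (h₃ : i ≠ 3) :
      x i ∉ ({x 1, x 2, x 3} : Finset V) := by
    simp [hx.eq_iff, h₁, h₂, h₃]
  obtain ⟨B, hB, hle⟩ := (hA.submatrix_equiv e).exists_permanent_le_of_option
    (p := ⟨x 4, hmem 4 (by simp) (by simp) (by simp)⟩)
    (q := ⟨x 0, hmem 0 (by simp) (by simp) (by simp)⟩) (by simp [hx.eq_iff])
    (by rw [submatrix_apply, he₁, he₂]; exact hadj 1)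
    (by rw [submatrix_apply, he₂, he₃]; exact hadj 2)
    (by rw [submatrix_apply, he₃, he]; exact hadj 3)
    (by rw [submatrix_apply, he₁, he]; exact hA.apply_eq_one_comm.1 (hadj 0))
    (by rwa [submatrix_apply, he, he, hA.isSymm.apply])
  rw [permanent_submatrix_equiv_self] at hle
  exact ⟨_, by rw [← Fintype.card_congr e]; simp only [Fintype.card_option], B, hB, hle⟩

theorem exists_short_cycle_or_path [Nonempty V] (hA : IsLambdaHat3 A) :
    (∃ k ≤ 2, ∃ x : Fin (k + 3) → V, Function.Injective x ∧ ∀ i, A (x i) (x (i + 1)) = 1) ∨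
      ∃ x : Fin 5 → V, Function.Injective x ∧ (∀ i : Fin 4, A (x i.castSucc) (x i.succ) = 1) ∧
        A (x 0) (x 4) = 0 := by
  obtain ⟨x₂⟩ := ‹Nonempty V›
  obtain ⟨x₁, n₁₂, h₂₁⟩ := hA.exists_neighbor x₂
  obtain ⟨x₃, n₃₂, n₃₁, h₂₃⟩ := hA.exists_other_neighbor n₁₂
  have h₁₂ := hA.apply_eq_one_comm.1 h₂₁
  have h₃₂ := hA.apply_eq_one_comm.1 h₂₃
  rcases (hA.zero_or_one x₃ x₁).symm with h₃₁ | h₃₁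
  · exact .inl ⟨0, by simp, ![x₁, x₂, x₃], List.nodup_ofFn.1 (by simp [*, Ne.symm]),
      by simp [Fin.forall_fin_succ, *]⟩
  obtain ⟨x₀, n₀₁, n₀₂, h₁₀⟩ := hA.exists_other_neighbor n₁₂.symm
  obtain ⟨x₄, n₄₃, n₄₂, h₃₄⟩ := hA.exists_other_neighbor n₃₂.symm
  have h₀₁ := hA.apply_eq_one_comm.1 h₁₀
  have h₄₃ := hA.apply_eq_one_comm.1 h₃₄
  have n₀₃ : x₀ ≠ x₃ := by rintro rfl; simp [h₃₁] at h₀₁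
  have n₁₄ : x₁ ≠ x₄ := by rintro rfl; simp [h₃₁] at h₃₄
  by_cases n₀₄ : x₀ = x₄
  · subst n₀₄
    exact .inl ⟨1, by simp, ![x₀, x₁, x₂, x₃], List.nodup_ofFn.1 (by simp [*, Ne.symm]),
      by simp [Fin.forall_fin_succ, *]⟩
  have hx : Function.Injective ![x₀, x₁, x₂, x₃, x₄] :=
    List.nodup_ofFn.1 (by simp [*, Ne.symm])
  rcases (hA.zero_or_one x₀ x₄).symm with h₀₄ | h₀₄
  · have h₄₀ := hA.apply_eq_one_comm.1 h₀₄
    exact .inl ⟨2, le_rfl, _, hx, by simp [Fin.forall_fin_succ, *]⟩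
  · exact .inr ⟨_, hx, by simp [Fin.forall_fin_succ, *], h₀₄⟩

theorem exists_reduction [DecidableEq V] [Nonempty V] (hA : IsLambdaHat3 A) :
    ∃ k ≤ 2, ∃ m, m + (k + 3) = Fintype.card V ∧
      ∃ B ∈ LambdaHat3 m, A.permanent ≤ (cycleMatrix k).permanent * B.permanent := by
  obtain ⟨k, hk, x, hx, hadj⟩ | ⟨x, hx, hadj, hx₀₄⟩ := hA.exists_short_cycle_or_path
  · obtain ⟨m, hm, B, hB, hAB⟩ := hA.exists_permanent_eq_cycleMatrix_mul hx hadj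
    exact ⟨k, hk, m, hm, B, hB, hAB.le⟩
  · refine ⟨0, zero_le, ?_⟩
    rw [permanent_cycleMatrix_zero]
    exact hA.exists_permanent_le_of_path hx hadj hx₀₄

end IsLambdaHat3

section Bound

/-- An upper bound for four times the permanent on `LambdaHat3 n`; it is sharp except for
`n = 1, 2, 5`. -/
def permanentBound : ℕ → ℤ
  | 0 => 4
  | 1 => 6
  | 2 => 9
  | n + 3 => 6 * permanentBound n

theorem permanentBound_add_three_mul (n k : ℕ) :
    permanentBound (n + 3 * k) = permanentBound n * 6 ^ k := by
  induction k with
  | zero => simp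
  | succ k ih =>
    rw [mul_add_one, ← add_assoc, permanentBound, ih]
    ring

theorem permanent_cycleMatrix_mul_permanentBound_le {k : ℕ} (hk : k ≤ 2) : ∀ n,
    (cycleMatrix k).permanent * permanentBound n ≤ permanentBound (n + (k + 3))
  | 0 | 1 | 2 => by
    interval_cases k <;> simp [permanent_cycleMatrix_zero, permanent_cycleMatrix_one,
      permanent_cycleMatrix_two, permanentBound]
  | n + 3 => by
    rw [add_right_comm, permanentBound, permanentBound]
    linarith [permanent_cycleMatrix_mul_permanentBound_le hk n]

theorem four_mul_permanent_le {n : ℕ} {A : Matrix (Fin n) (Fin n) ℤ} (hA : A ∈ LambdaHat3 n) :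
    4 * A.permanent ≤ permanentBound n := by
  induction n using Nat.strong_induction_on with
  | _ n ih =>
  obtain rfl | hn := Nat.eq_zero_or_pos n
  · simp [permanentBound, permanent_isEmpty]
  have : Nonempty (Fin n) := ⟨⟨0, hn⟩⟩
  obtain ⟨k, hk, m, hm, B, hB, hAB⟩ := (mem_lambdaHat3_iff.1 hA).exists_reduction
  rw [Fintype.card_fin] at hm
  calc 4 * A.permanent
      ≤ (cycleMatrix k).permanent * (4 * B.permanent) := by linarith
    _ ≤ (cycleMatrix k).permanent * permanentBound m := by
        gcongr
        · exact permanent_nonneg (isLambdaHat3_cycleMatrix k).nonneg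
        · exact ih m (by lia) hB
    _ ≤ permanentBound n := hm ▸ permanent_cycleMatrix_mul_permanentBound_le hk m

end Bound

section Attained

theorem mul_mem_permanent_image {m n : ℕ} {x y : ℤ} (hx : x ∈ permanent '' LambdaHat3 m)
    (hy : y ∈ permanent '' LambdaHat3 n) : x * y ∈ permanent '' LambdaHat3 (m + n) := by
  obtain ⟨A, hA, rfl⟩ := hx
  obtain ⟨B, hB, rfl⟩ := hy
  have hAB := (mem_lambdaHat3_iff.1 hA).fromBlocks (mem_lambdaHat3_iff.1 hB)
  exact ⟨_, mem_lambdaHat3_iff.2 (hAB.submatrix_equiv finSumFinEquiv.symm),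
    by rw [permanent_submatrix_equiv_self, permanent_fromBlocks_zero₂₁]⟩

theorem one_mem_permanent_image : 1 ∈ permanent '' LambdaHat3 0 :=
  ⟨1, mem_lambdaHat3_iff.2 ⟨nofun, nofun, isSymm_one, nofun⟩, permanent_one⟩

theorem permanent_cycleMatrix_mem_image (k : ℕ) :
    (cycleMatrix k).permanent ∈ permanent '' LambdaHat3 (k + 3) :=
  ⟨_, mem_lambdaHat3_iff.2 (isLambdaHat3_cycleMatrix k), rfl⟩

theorem nine_mem_permanent_image : 9 ∈ permanent '' LambdaHat3 4 :=
  permanent_cycleMatrix_one ▸ permanent_cycleMatrix_mem_image 1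

theorem eighty_one_mem_permanent_image : 81 ∈ permanent '' LambdaHat3 8 :=
  mul_mem_permanent_image nine_mem_permanent_image nine_mem_permanent_image

theorem mul_pow_mem_permanent_image {n : ℕ} {x : ℤ} (hx : x ∈ permanent '' LambdaHat3 n) (k : ℕ) :
    x * 6 ^ k ∈ permanent '' LambdaHat3 (n + 3 * k) := by
  induction k with
  | zero => simpa using hx
  | succ k ih =>
    rw [mul_add_one, ← add_assoc, pow_succ, ← mul_assoc]
    exact mul_mem_permanent_image ih
      (permanent_cycleMatrix_zero ▸ permanent_cycleMatrix_mem_image 0)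

theorem isGreatest_mul_pow {n : ℕ} {x : ℤ} (hx : x ∈ permanent '' LambdaHat3 n)
    (hbound : permanentBound n = 4 * x) (k : ℕ) :
    IsGreatest (permanent '' LambdaHat3 (n + 3 * k)) (x * 6 ^ k) := by
  refine ⟨mul_pow_mem_permanent_image hx k, ?_⟩
  rintro _ ⟨A, hA, rfl⟩
  have hle := four_mul_permanent_le hA
  rw [permanentBound_add_three_mul, hbound] at hle
  linarith

end Attained

theorem stmt_14 (n : ℕ) (hn : 3 ≤ n) :
    (n % 3 = 0 →
      IsGreatest {x : ℤ | ∃ A ∈ LambdaHat3 n, A.permanent = x} (6 ^ (n / 3))) ∧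
    (n % 3 = 1 →
      IsGreatest {x : ℤ | ∃ A ∈ LambdaHat3 n, A.permanent = x} (9 * 6 ^ ((n - 4) / 3))) ∧
    (n % 3 = 2 → 8 ≤ n →
      IsGreatest {x : ℤ | ∃ A ∈ LambdaHat3 n, A.permanent = x} (81 * 6 ^ ((n - 8) / 3))) := by
  refine ⟨fun h₀ => ?_, fun h₁ => ?_, fun h₂ hn₈ => ?_⟩
  · have hmax := isGreatest_mul_pow one_mem_permanent_image (by decide) (n / 3)
    rwa [show 0 + 3 * (n / 3) = n by lia, one_mul] at hmax
  · have hmax := isGreatest_mul_pow nine_mem_permanent_image (by decide) ((n - 4) / 3)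
    rwa [show 4 + 3 * ((n - 4) / 3) = n by lia] at hmax
  · have hmax := isGreatest_mul_pow eighty_one_mem_permanent_image (by decide) ((n - 8) / 3)
    rwa [show 8 + 3 * ((n - 8) / 3) = n by lia] at hmax
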